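/- arXiv:2001.04207 — 4 statements merged into one kernel-verified Lean document; each statement's English description precedes it below -/
import Mathlib

section
/- Let 1 ≤ p₁, p₂, q₁, q₂ < ∞, let B ⊆ ℕ × ℕ be a block, let E₁, E₂, F be Banach spaces and let T : E₁ × E₂ → F be a continuous bilinear operator. Suppose that for every weakly p₁-summable sequence (x_j) in E₁ and every weakly p₂-summable sequence (y_k) in E₂ one has Σ_{j=0}^∞ ( Σ_{k ∈ B^j} ‖T(x_j, y_k)‖^{q₂} )^{q₁/q₂} < ∞. Then there exists a constant C ≥ 0 such that for all such sequences ( Σ_{j=0}^∞ ( Σ_{k ∈ B^j} ‖T(x_j, y_k)‖^{q₂} )^{q₁/q₂} )^{1/q₁} ≤ C · ‖(x_j)‖_{w,p₁} · ‖(y_k)‖_{w,p₂}. -/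
/-!
The weakly `p`-summable sequences in a Banach space `E` form a Banach space under the weak `ℓ_p`
norm: a sequence `x` is identified with the operator `φ ↦ (φ (x j))_j` from `E*` to `ℓ_p`, which is
bounded by the closed graph theorem and has operator norm equal to the weak norm. The operators
arising this way are those whose coordinates, elements of `E**`, lie in the canonical image of `E`,
and this is a closed condition (`weakSpace`, `weakSpace_exists_of_weaklySummable`,
`exists_weak_banach`).

On two such spaces `W₁`, `W₂` the hypothesis says that `(x, y) ↦ (T (x j) (y k))` is a
bilinear map into the Banach space `ℓ_{q₁}(ℓ_{q₂})` over the block. Each partial map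
`W₂ → ℓ_{q₁}(ℓ_{q₂})` is continuous by the closed graph theorem, since its coordinates are continuous; a second
application shows that `W₁ → L(W₂, ℓ_{q₁}(ℓ_{q₂}))` is continuous, and its operator norm is the
constant (`mixed_bound`).
-/

/-- The weak `ℓ_p` norm of a sequence `x` in a normed space `E` over `𝕜`:
the supremum over functionals `φ` in the closed unit ball of the dual of
`(∑_j ‖φ(x_j)‖^p)^(1/p)`. -/
noncomputable def weakNorm (𝕜 : Type*) [RCLike 𝕜] {E : Type*} [NormedAddCommGroup E]
    [NormedSpace 𝕜 E] (p : ℝ) (x : ℕ → E) : ℝ :=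
  ⨆ φ : {φ : E →L[𝕜] 𝕜 // ‖φ‖ ≤ 1}, (∑' j, ‖φ.1 (x j)‖ ^ p) ^ (1 / p)

/-- A sequence `x` in a normed space `E` over `𝕜` is weakly `p`-summable if
`(φ(x_j))_j ∈ ℓ_p` for every continuous linear functional `φ`. -/
def WeaklySummable (𝕜 : Type*) [RCLike 𝕜] {E : Type*} [NormedAddCommGroup E]
    [NormedSpace 𝕜 E] (p : ℝ) (x : ℕ → E) : Prop :=
  ∀ φ : E →L[𝕜] 𝕜, Summable fun j => ‖φ (x j)‖ ^ p

open Filter Topology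

/-- Closed graph theorem in coordinates: a linear map between Banach spaces is continuous as soon
as its composites with a point-separating family of continuous maps are. -/
theorem continuous_of_separating {𝕜 U V Z ι : Type*} [NontriviallyNormedField 𝕜]
    [NormedAddCommGroup U] [NormedSpace 𝕜 U] [CompleteSpace U]
    [NormedAddCommGroup V] [NormedSpace 𝕜 V] [CompleteSpace V]
    [TopologicalSpace Z] [T2Space Z]
    (f : U →ₗ[𝕜] V) (c : ι → V → Z) (hc : ∀ i, Continuous (c i))
    (hsep : ∀ v w, (∀ i, c i v = c i w) → v = w)
    (hcf : ∀ i, Continuous fun u => c i (f u)) : Continuous f := by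
  refine f.continuous_of_seq_closed_graph fun u x y hu hy => hsep _ _ fun i => ?_
  exact tendsto_nhds_unique (((hc i).tendsto y).comp hy) (((hcf i).tendsto x).comp hu)

theorem fact_one_le_ofReal {p : ℝ} (hp : 1 ≤ p) : Fact (1 ≤ ENNReal.ofReal p) :=
  ⟨by simpa using hp⟩

theorem toReal_ofReal_of_one_le {p : ℝ} (hp : 1 ≤ p) : (ENNReal.ofReal p).toReal = p :=
  ENNReal.toReal_ofReal (zero_le_one.trans hp)

theorem memlp_ofReal_iff {ι : Type*} {G : ι → Type*} [∀ i, NormedAddCommGroup (G i)]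
    {p : ℝ} (hp : 1 ≤ p) {f : ∀ i, G i} :
    Memℓp f (ENNReal.ofReal p) ↔ Summable fun i => ‖f i‖ ^ p := by
  have h := toReal_ofReal_of_one_le hp
  rw [memℓp_gen_iff (by rw [h]; linarith), h]

theorem lp_norm_ofReal {ι : Type*} {G : ι → Type*} [∀ i, NormedAddCommGroup (G i)]
    {p : ℝ} (hp : 1 ≤ p) (f : lp G (ENNReal.ofReal p)) :
    ‖f‖ = (∑' i, ‖f i‖ ^ p) ^ (1 / p) := by
  have h := toReal_ofReal_of_one_le hp
  rw [lp.norm_eq_tsum_rpow (by rw [h]; linarith), h]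

theorem lp_continuous_coord {ι : Type*} {G : ι → Type*} [∀ i, NormedAddCommGroup (G i)]
    {p : ℝ} [Fact (1 ≤ ENNReal.ofReal p)] (i : ι) : Continuous fun f : lp G (ENNReal.ofReal p) => f i := by
  have hlip : LipschitzWith 1 fun f : lp G (ENNReal.ofReal p) => f i := by
    refine LipschitzWith.of_dist_le_mul fun f g => ?_
    rw [dist_eq_norm, dist_eq_norm]
    simpa using lp.norm_apply_le_norm (zero_lt_one.trans_le (Fact.out : 1 ≤ ENNReal.ofReal p)).ne' (f - g) i
  exact hlip.continuous

universe u v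

section CoordSubmodule

variable {𝕜 V D E : Type*} [NontriviallyNormedField 𝕜]
  [NormedAddCommGroup V] [NormedSpace 𝕜 V] [NormedAddCommGroup D] [NormedSpace 𝕜 D]
  [NormedAddCommGroup E] [NormedSpace 𝕜 E]

/-- The vectors of `V` all of whose `D`-valued coordinates `c j` lie in the isometric copy `i E`
of `E`. -/
noncomputable def coordSubmodule (c : ℕ → V →L[𝕜] D) (i : E →ₗᵢ[𝕜] D) : Submodule 𝕜 V :=
  ⨅ j, (LinearMap.range i.toLinearMap).comap (c j).toLinearMap

theorem mem_coordSubmodule {c : ℕ → V →L[𝕜] D} {i : E →ₗᵢ[𝕜] D} {v : V} :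
    v ∈ coordSubmodule c i ↔ ∀ j, ∃ x, i x = c j v := by
  simp [coordSubmodule]

theorem coordSubmodule_completeSpace [CompleteSpace V] [CompleteSpace E]
    (c : ℕ → V →L[𝕜] D) (i : E →ₗᵢ[𝕜] D) : CompleteSpace (coordSubmodule c i) := by
  have hr : IsClosed (Set.range i) := i.isometry.isClosedEmbedding.isClosed_range
  have h : (coordSubmodule c i : Set V) = ⋂ j, c j ⁻¹' Set.range i := by
    ext v
    simp [mem_coordSubmodule]
  have hcl : IsClosed (coordSubmodule c i : Set V) := by
    rw [h]
    exact isClosed_iInter fun j => hr.preimage (c j).continuous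
  exact hcl.completeSpace_coe

end CoordSubmodule

section WeakSpace

variable (𝕜 : Type*) [RCLike 𝕜] (E : Type*) [NormedAddCommGroup E] [NormedSpace 𝕜 E]
variable (p : ℝ) [Fact (1 ≤ ENNReal.ofReal p)]

/-- The `j`-th coordinate of an operator `E* → ℓ_p`, as an element of the bidual `E**`. -/
noncomputable def bidualCoord (j : ℕ) :
    ((E →L[𝕜] 𝕜) →L[𝕜] lp (fun _ : ℕ => 𝕜) (ENNReal.ofReal p)) →L[𝕜]
      ((E →L[𝕜] 𝕜) →L[𝕜] 𝕜) :=
  ContinuousLinearMap.compL 𝕜 (E →L[𝕜] 𝕜) (lp (fun _ : ℕ => 𝕜) (ENNReal.ofReal p)) 𝕜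
    (lp.evalCLM 𝕜 (fun _ : ℕ => 𝕜) (ENNReal.ofReal p) j)

/-- The space of weakly `p`-summable sequences `x` in `E`, realized as the operators
`φ ↦ (φ (x j))_j` from `E*` to `ℓ_p`, i.e. the operators all of whose coordinates lie in the
canonical image of `E` in `E**`. The operator norm is the weak `ℓ_p` norm. -/
noncomputable def weakSpace :=
  coordSubmodule (𝕜 := 𝕜) (E := E) (D := (E →L[𝕜] 𝕜) →L[𝕜] 𝕜)
    (V := (E →L[𝕜] 𝕜) →L[𝕜] lp (fun _ : ℕ => 𝕜) (ENNReal.ofReal p))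
    (bidualCoord 𝕜 E p) (NormedSpace.inclusionInDoubleDualLi 𝕜 (E := E))

instance weakSpace_completeSpace [CompleteSpace E] : CompleteSpace (weakSpace 𝕜 E p) :=
  coordSubmodule_completeSpace _ _

variable {𝕜 E p}

theorem weakSpace_exists (S : weakSpace 𝕜 E p) (j : ℕ) :
    ∃ x : E, ∀ φ : E →L[𝕜] 𝕜, φ x = S.1 φ j := by
  have h := mem_coordSubmodule.1 S.2 j
  obtain ⟨x, hx⟩ := h
  exact ⟨x, fun φ => DFunLike.congr_fun hx φ⟩

/-- An element of `weakSpace` is a sequence in `E`,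
and its `j`-th term depends linearly and continuously on it. -/
theorem weakSpace_exists_coord :
    ∃ a : ℕ → (weakSpace 𝕜 E p →L[𝕜] E), ∀ j S (φ : E →L[𝕜] 𝕜), φ (a j S) = S.1 φ j := by
  choose x hx using weakSpace_exists (𝕜 := 𝕜) (E := E) (p := p)
  refine ⟨fun j => LinearMap.mkContinuous
    { toFun := fun S => x S j
      map_add' := fun S S' => ?_
      map_smul' := fun c S => ?_ } 1 fun S => ?_, fun j S φ => hx S j φ⟩
  · refine (SeparatingDual.eq_iff_forall_dual_eq (R := 𝕜)).2 fun φ => ?_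
    simp [hx]
  · refine (SeparatingDual.eq_iff_forall_dual_eq (R := 𝕜)).2 fun φ => ?_
    simp [hx]
  · refine NormedSpace.norm_le_dual_bound 𝕜 _ (by positivity) fun φ => ?_
    have h1 := lp.norm_apply_le_norm
      (zero_lt_one.trans_le (Fact.out : 1 ≤ ENNReal.ofReal p)).ne' (S.1 φ) j
    have h2 := S.1.le_opNorm φ
    simp only [LinearMap.coe_mk, AddHom.coe_mk, hx, one_mul]
    exact h1.trans h2

theorem weakSpace_weaklySummable (hp : 1 ≤ p) (S : weakSpace 𝕜 E p) (x : ℕ → E)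
    (hx : ∀ j (φ : E →L[𝕜] 𝕜), φ (x j) = S.1 φ j) : WeaklySummable 𝕜 p x := by
  intro φ
  simp only [hx]
  exact (memlp_ofReal_iff hp).1 (lp.memℓp (S.1 φ))

/-- Every weakly `p`-summable sequence comes from `weakSpace`, with operator norm at most the
weak norm. Boundedness of the operator `φ ↦ (φ (x j))_j`, hence finiteness of the supremum defining
the weak norm, comes from the closed graph theorem. -/
theorem weakSpace_exists_of_weaklySummable (hp : 1 ≤ p) (x : ℕ → E)
    (hx : WeaklySummable 𝕜 p x) :
    ∃ S : weakSpace 𝕜 E p, (∀ j (φ : E →L[𝕜] 𝕜), φ (x j) = S.1 φ j) ∧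
      ‖S‖ ≤ weakNorm 𝕜 p x := by
  let L : (E →L[𝕜] 𝕜) →ₗ[𝕜] lp (fun _ : ℕ => 𝕜) (ENNReal.ofReal p) :=
    { toFun := fun φ => ⟨fun j => φ (x j), (memlp_ofReal_iff hp).2 (hx φ)⟩
      map_add' := fun φ ψ => by ext j; rfl
      map_smul' := fun c φ => by ext j; rfl }
  have hL : Continuous L := by
    refine continuous_of_separating L (fun (j : ℕ) v => v j) (fun j => lp_continuous_coord j)
      (fun v w h => by ext j; exact h j) fun j => ?_
    exact (ContinuousLinearMap.apply 𝕜 𝕜 (x j)).continuous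
  let S : (E →L[𝕜] 𝕜) →L[𝕜] lp (fun _ : ℕ => 𝕜) (ENNReal.ofReal p) := ⟨L, hL⟩
  have hS : ∀ φ, ‖S φ‖ = (∑' j, ‖φ (x j)‖ ^ p) ^ (1 / p) := fun φ => lp_norm_ofReal hp _
  have hmem : S ∈ weakSpace 𝕜 E p := by
    refine mem_coordSubmodule.2 fun j => ⟨x j, ?_⟩
    ext φ
    rfl
  refine ⟨⟨S, hmem⟩, fun j φ => rfl, ?_⟩
  have hle : ∀ φ : E →L[𝕜] 𝕜, ‖φ‖ ≤ 1 → ‖S φ‖ ≤ weakNorm 𝕜 p x := by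
    intro φ hφ
    rw [hS]
    refine le_ciSup (f := fun φ : {φ : E →L[𝕜] 𝕜 // ‖φ‖ ≤ 1} =>
      (∑' j, ‖φ.1 (x j)‖ ^ p) ^ (1 / p)) ⟨‖S‖, ?_⟩ ⟨φ, hφ⟩
    rintro _ ⟨ψ, rfl⟩
    simp only [← hS]
    exact S.unit_le_opNorm ψ.1 ψ.2
  change ‖S‖ ≤ _
  rw [← S.sSup_unitClosedBall_eq_norm]
  refine csSup_le ((Metric.nonempty_closedBall.2 zero_le_one).image _) ?_
  rintro _ ⟨φ, hφ, rfl⟩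
  exact hle φ (by simpa using hφ)

end WeakSpace

/-- The weakly `p`-summable sequences in a Banach space are parametrized by a Banach space `W` with
continuous linear coordinates, whose norm is at most the weak norm. -/
theorem exists_weak_banach {𝕜 : Type u} {E : Type v} [RCLike 𝕜] [NormedAddCommGroup E]
    [NormedSpace 𝕜 E] [CompleteSpace E] {p : ℝ} (hp : 1 ≤ p) :
    ∃ (W : Type (max u v)) (_ : NormedAddCommGroup W) (_ : NormedSpace 𝕜 W) (_ : CompleteSpace W)
      (a : ℕ → W →L[𝕜] E), (∀ w, WeaklySummable 𝕜 p fun j => a j w) ∧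
        ∀ x, WeaklySummable 𝕜 p x → ∃ w, (∀ j, a j w = x j) ∧ ‖w‖ ≤ weakNorm 𝕜 p x := by
  have : Fact (1 ≤ ENNReal.ofReal p) := fact_one_le_ofReal hp
  obtain ⟨a, ha⟩ := weakSpace_exists_coord (𝕜 := 𝕜) (E := E) (p := p)
  refine ⟨weakSpace 𝕜 E p, inferInstance, inferInstance, inferInstance, a,
    fun w => weakSpace_weaklySummable hp w _ fun j φ => ha j w φ, fun x hx => ?_⟩
  obtain ⟨w, hw, hwx⟩ := weakSpace_exists_of_weaklySummable hp x hx
  exact ⟨w, fun j => (SeparatingDual.eq_iff_forall_dual_eq (R := 𝕜)).2 fun φ => by rw [ha, hw],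
    hwx⟩

/-- If a bilinear map given by coordinates `T (a j u) (b k v)` on Banach spaces takes values in the
mixed sequence space `ℓ_{q₁}(ℓ_{q₂})` over the block `B`, then it is bounded: both the partial maps
and the curried map are continuous by the closed graph theorem. -/
theorem mixed_bound {𝕜 E₁ E₂ F W₁ W₂ : Type*} [RCLike 𝕜]
    [NormedAddCommGroup E₁] [NormedSpace 𝕜 E₁]
    [NormedAddCommGroup E₂] [NormedSpace 𝕜 E₂]
    [NormedAddCommGroup F] [NormedSpace 𝕜 F] [CompleteSpace F]
    [NormedAddCommGroup W₁] [NormedSpace 𝕜 W₁] [CompleteSpace W₁]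
    [NormedAddCommGroup W₂] [NormedSpace 𝕜 W₂] [CompleteSpace W₂]
    {q₁ q₂ : ℝ} (hq₁ : 1 ≤ q₁) (hq₂ : 1 ≤ q₂) (B : Set (ℕ × ℕ))
    (T : E₁ →L[𝕜] E₂ →L[𝕜] F) (a : ℕ → W₁ →L[𝕜] E₁) (b : ℕ → W₂ →L[𝕜] E₂)
    (h₂ : ∀ u v j, Summable fun k : {k : ℕ // (j, k) ∈ B} => ‖T (a j u) (b k.1 v)‖ ^ q₂)
    (h₁ : ∀ u v, Summable fun j =>
      (∑' k : {k : ℕ // (j, k) ∈ B}, ‖T (a j u) (b k.1 v)‖ ^ q₂) ^ (q₁ / q₂)) :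
    ∃ C : ℝ, 0 ≤ C ∧ ∀ u v,
      (∑' j, (∑' k : {k : ℕ // (j, k) ∈ B}, ‖T (a j u) (b k.1 v)‖ ^ q₂) ^ (q₁ / q₂)) ^ (1 / q₁)
        ≤ C * ‖u‖ * ‖v‖ := by
  have : Fact (1 ≤ ENNReal.ofReal q₁) := fact_one_le_ofReal hq₁
  have : Fact (1 ≤ ENNReal.ofReal q₂) := fact_one_le_ofReal hq₂
  let r : W₁ → W₂ → ∀ j, lp (fun _ : {k : ℕ // (j, k) ∈ B} => F) (ENNReal.ofReal q₂) :=
    fun u v j => ⟨fun k => T (a j u) (b k.1 v), (memlp_ofReal_iff hq₂).2 (h₂ u v j)⟩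
  have hr : ∀ u v j, ‖r u v j‖ ^ q₁ =
      (∑' k : {k : ℕ // (j, k) ∈ B}, ‖T (a j u) (b k.1 v)‖ ^ q₂) ^ (q₁ / q₂) := by
    intro u v j
    rw [lp_norm_ofReal hq₂, ← Real.rpow_mul (tsum_nonneg fun _ => by positivity)]
    congr 1
    ring
  let M : W₁ → W₂ → lp (fun j => lp (fun _ : {k : ℕ // (j, k) ∈ B} => F) (ENNReal.ofReal q₂))
      (ENNReal.ofReal q₁) := fun u v =>
    ⟨r u v, (memlp_ofReal_iff hq₁).2 (by simpa only [hr] using h₁ u v)⟩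
  have hM : ∀ u v j k, M u v j k = T (a j u) (b k.1 v) := fun _ _ _ _ => rfl
  have hnorm : ∀ u v, ‖M u v‖ =
      (∑' j, (∑' k : {k : ℕ // (j, k) ∈ B}, ‖T (a j u) (b k.1 v)‖ ^ q₂) ^ (q₁ / q₂))
        ^ (1 / q₁) := by
    intro u v
    rw [lp_norm_ofReal hq₁]
    simp only [← hr]
    rfl
  let c : (Σ j, {k : ℕ // (j, k) ∈ B}) →
      lp (fun j => lp (fun _ : {k : ℕ // (j, k) ∈ B} => F) (ENNReal.ofReal q₂))
        (ENNReal.ofReal q₁) → F := fun i z => z i.1 i.2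
  have hc : ∀ i, Continuous (c i) := fun i =>
    (lp_continuous_coord (G := fun _ : {k : ℕ // (i.1, k) ∈ B} => F) i.2).comp
      (lp_continuous_coord i.1)
  have hsep : ∀ z w, (∀ i, c i z = c i w) → z = w := by
    intro z w h
    ext j k
    exact h ⟨j, k⟩
  let P : W₁ → W₂ →L[𝕜] lp (fun j => lp (fun _ : {k : ℕ // (j, k) ∈ B} => F)
      (ENNReal.ofReal q₂)) (ENNReal.ofReal q₁) := fun u =>
    { toFun := M u
      map_add' := fun v w => hsep _ _ fun i => by simp [c, hM]
      map_smul' := fun (t : 𝕜) v => hsep _ _ fun i => by simp [c, hM]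
      cont := continuous_of_separating
        { toFun := M u
          map_add' := fun v w => hsep _ _ fun i => by simp [c, hM]
          map_smul' := fun (t : 𝕜) v => hsep _ _ fun i => by simp [c, hM] } c hc hsep fun i =>
        ((T (a i.1 u)).comp (b i.2.1)).continuous }
  have hP : ∀ u v, P u v = M u v := fun _ _ => rfl
  let Q : W₁ →ₗ[𝕜] W₂ →L[𝕜] lp (fun j => lp (fun _ : {k : ℕ // (j, k) ∈ B} => F)
      (ENNReal.ofReal q₂)) (ENNReal.ofReal q₁) :=
    { toFun := P
      map_add' := fun u w => by
        ext1 v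
        exact hsep _ _ fun i => by simp [c, hM, hP]
      map_smul' := fun (t : 𝕜) u => by
        ext1 v
        exact hsep _ _ fun i => by simp [c, hM, hP] }
  have hQ : Continuous Q := by
    refine continuous_of_separating Q
      (fun (i : W₂ × (Σ j, {k : ℕ // (j, k) ∈ B})) R => c i.2 (R i.1))
      (fun i => (hc i.2).comp (ContinuousLinearMap.apply 𝕜 _ i.1).continuous)
      (fun R R' h => by
        ext1 v
        exact hsep _ _ fun i => h (v, i)) fun i => ?_
    change Continuous fun u => T (a i.2.1 u) (b i.2.2.1 i.1)
    exact (T.continuous.comp (a i.2.1).continuous).clm_apply continuous_const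
  let Q' : W₁ →L[𝕜] W₂ →L[𝕜] lp (fun j => lp (fun _ : {k : ℕ // (j, k) ∈ B} => F)
      (ENNReal.ofReal q₂)) (ENNReal.ofReal q₁) := ⟨Q, hQ⟩
  refine ⟨‖Q'‖, Q'.opNorm_nonneg, fun u v => ?_⟩
  rw [← hnorm]
  exact Q'.le_opNorm₂ u v

/-- If a continuous bilinear operator `T : E₁ × E₂ → F` transforms pairs of
weakly `p₁`- and `p₂`-summable sequences into sequences with finite anisotropic sum over the
block `B`, then there is a constant `C ≥ 0` bounding the corresponding mixed norm by the
product of the weak norms. -/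
theorem statement0 {𝕜 E₁ E₂ F : Type*} [RCLike 𝕜]
    [NormedAddCommGroup E₁] [NormedSpace 𝕜 E₁] [CompleteSpace E₁]
    [NormedAddCommGroup E₂] [NormedSpace 𝕜 E₂] [CompleteSpace E₂]
    [NormedAddCommGroup F] [NormedSpace 𝕜 F] [CompleteSpace F]
    (p₁ p₂ q₁ q₂ : ℝ) (hp₁ : 1 ≤ p₁) (hp₂ : 1 ≤ p₂) (hq₁ : 1 ≤ q₁) (hq₂ : 1 ≤ q₂)
    (B : Set (ℕ × ℕ)) (hB : B.Nonempty)
    (T : E₁ →L[𝕜] E₂ →L[𝕜] F)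
    (hT : ∀ (x : ℕ → E₁) (y : ℕ → E₂),
      WeaklySummable 𝕜 p₁ x → WeaklySummable 𝕜 p₂ y →
      (∀ j, Summable fun k : {k : ℕ // (j, k) ∈ B} => ‖T (x j) (y k.1)‖ ^ q₂) ∧
        Summable fun j =>
          (∑' k : {k : ℕ // (j, k) ∈ B}, ‖T (x j) (y k.1)‖ ^ q₂) ^ (q₁ / q₂)) :
    ∃ C : ℝ, 0 ≤ C ∧ ∀ (x : ℕ → E₁) (y : ℕ → E₂),
      WeaklySummable 𝕜 p₁ x → WeaklySummable 𝕜 p₂ y →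
      (∑' j, (∑' k : {k : ℕ // (j, k) ∈ B}, ‖T (x j) (y k.1)‖ ^ q₂) ^ (q₁ / q₂)) ^ (1 / q₁)
        ≤ C * weakNorm 𝕜 p₁ x * weakNorm 𝕜 p₂ y := by
  obtain ⟨W₁, _, _, _, a, ha, hax⟩ := exists_weak_banach (𝕜 := 𝕜) (E := E₁) hp₁
  obtain ⟨W₂, _, _, _, b, hb, hby⟩ := exists_weak_banach (𝕜 := 𝕜) (E := E₂) hp₂
  obtain ⟨C, hC, hbound⟩ := mixed_bound hq₁ hq₂ B T a b
    (fun u v => (hT _ _ (ha u) (hb v)).1) (fun u v => (hT _ _ (ha u) (hb v)).2)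
  refine ⟨C, hC, fun x y hx hy => ?_⟩
  obtain ⟨u, hu, hux⟩ := hax x hx
  obtain ⟨v, hv, hvy⟩ := hby y hy
  have h := hbound u v
  simp only [hu, hv] at h
  have hx0 : 0 ≤ weakNorm 𝕜 p₁ x := (norm_nonneg u).trans hux
  refine h.trans ?_
  gcongr
end

section
/- Let 1 ≤ p₁, p₂, p₃, q₁, q₂ < ∞, let E₁, E₂, E₃, F be Banach spaces and let T : E₁ × E₂ × E₃ → F be a continuous trilinear operator. Suppose that for every weakly p₁-summable sequence (x_j) in E₁, every weakly p₂-summable sequence (y_j) in E₂ and every weakly p₃-summable sequence (z_k) in E₃ one has Σ_{j=0}^∞ ( Σ_{k=0}^∞ ‖T(x_j, y_j, z_k)‖^{q₂} )^{q₁/q₂} < ∞. Then there exists a constant C ≥ 0 such that for all such sequences ( Σ_{j=0}^∞ ( Σ_{k=0}^∞ ‖T(x_j, y_j, z_k)‖^{q₂} )^{q₁/q₂} )^{1/q₁} ≤ C · ‖(x_j)‖_{w,p₁} · ‖(y_j)‖_{w,p₂} · ‖(z_k)‖_{w,p₃}. -/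
section Weak

variable {𝕜 : Type*} [RCLike 𝕜] {E : Type*} [NormedAddCommGroup E] [NormedSpace 𝕜 E]

/-- `x` is weakly `p`-summable with weak `ℓ_p` norm at most `r`. -/
def WeakBound (𝕜 : Type*) [RCLike 𝕜] {E : Type*} [NormedAddCommGroup E]
    [NormedSpace 𝕜 E] (p : ℝ) (r : ℝ) (x : ℕ → E) : Prop :=
  ∀ φ : E →L[𝕜] 𝕜, Summable (fun j => ‖φ (x j)‖ ^ p) ∧ ∑' j, ‖φ (x j)‖ ^ p ≤ (‖φ‖ * r) ^ p

/-- Uniform boundedness, applied to the maps `φ ↦ (φ (x 0), …, φ (x (N - 1)), 0, 0, …)` from the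
dual of `E` to `ℓ_p`. -/
lemma exists_weak_bound {p : ℝ} (hp : 1 ≤ p) {x : ℕ → E} (hx : WeaklySummable 𝕜 p x) :
    ∃ C : ℝ, ∀ φ : E →L[𝕜] 𝕜, ‖φ‖ ≤ 1 → (∑' j, ‖φ (x j)‖ ^ p) ^ (1 / p) ≤ C := by
  have hp0 : 0 < p := by linarith
  have : Fact (1 ≤ ENNReal.ofReal p) := ⟨by simpa using hp⟩
  have hpr : (ENNReal.ofReal p).toReal = p := ENNReal.toReal_ofReal hp0.le
  let g : ℕ → (E →L[𝕜] 𝕜) →L[𝕜] lp (fun _ : ℕ => 𝕜) (ENNReal.ofReal p) := fun N =>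
    ∑ j ∈ Finset.range N,
      (lp.singleContinuousLinearMap 𝕜 (fun _ : ℕ => 𝕜) (ENNReal.ofReal p) j).comp
        (ContinuousLinearMap.apply 𝕜 𝕜 (x j))
  have hg : ∀ N φ, ‖g N φ‖ = (∑ j ∈ Finset.range N, ‖φ (x j)‖ ^ p) ^ (1 / p) := by
    intro N φ
    have h := lp.norm_sum_single (p := ENNReal.ofReal p) (by rw [hpr]; exact hp0)
      (fun j => φ (x j)) (Finset.range N)
    rw [hpr] at h
    rw [← h, one_div, Real.rpow_rpow_inv (norm_nonneg _) hp0.ne']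
    simp [g]
  obtain ⟨C, hC⟩ := banach_steinhaus (g := g) (fun φ => ⟨(∑' j, ‖φ (x j)‖ ^ p) ^ (1 / p), by
    intro N
    rw [hg]
    have := (hx φ).sum_le_tsum (Finset.range N) (fun j _ => by positivity)
    gcongr⟩)
  refine ⟨C, fun φ hφ => ?_⟩
  have hlim : Filter.Tendsto (fun N => ‖g N φ‖) Filter.atTop
      (nhds ((∑' j, ‖φ (x j)‖ ^ p) ^ (1 / p))) := by
    simp_rw [hg]
    exact (hx φ).hasSum.tendsto_sum_nat.rpow_const (Or.inr (by positivity))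
  refine le_of_tendsto' hlim fun N => ?_
  calc ‖g N φ‖ ≤ ‖g N‖ * ‖φ‖ := (g N).le_opNorm φ
    _ ≤ ‖g N‖ * 1 := by gcongr
    _ ≤ C := by simpa using hC N

lemma weakNorm_nonneg (p : ℝ) (x : ℕ → E) : 0 ≤ weakNorm 𝕜 p x :=
  Real.iSup_nonneg fun φ => by positivity

lemma weakBound_weakNorm {p : ℝ} (hp : 1 ≤ p) {x : ℕ → E} (hx : WeaklySummable 𝕜 p x) :
    WeakBound 𝕜 p (weakNorm 𝕜 p x) x := by
  have hp0 : 0 < p := by linarith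
  intro φ
  refine ⟨hx φ, ?_⟩
  have hw := weakNorm_nonneg (𝕜 := 𝕜) p x
  by_cases h0 : φ = 0
  · subst h0
    simp [Real.zero_rpow hp0.ne']
  have hn : 0 < ‖φ‖ := norm_pos_iff.2 h0
  obtain ⟨C, hC⟩ := exists_weak_bound hp hx
  have hle : ∀ ψ : E →L[𝕜] 𝕜, ‖ψ‖ ≤ 1 → ∑' j, ‖ψ (x j)‖ ^ p ≤ weakNorm 𝕜 p x ^ p := by
    intro ψ hψ
    have h1 : (∑' j, ‖ψ (x j)‖ ^ p) ^ (1 / p) ≤ weakNorm 𝕜 p x :=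
      le_ciSup (f := fun φ : {φ : E →L[𝕜] 𝕜 // ‖φ‖ ≤ 1} => (∑' j, ‖φ.1 (x j)‖ ^ p) ^ (1 / p))
        ⟨C, by rintro _ ⟨φ, rfl⟩; exact hC φ.1 φ.2⟩ ⟨ψ, hψ⟩
    rw [one_div] at h1
    exact (Real.rpow_inv_le_iff_of_pos (by positivity) hw hp0).1 h1
  have h2 := hle (((‖φ‖⁻¹ : ℝ) : 𝕜) • φ) (by
    rw [norm_smul, RCLike.norm_ofReal, abs_of_pos (by positivity), inv_mul_cancel₀ hn.ne'])
  have h3 : ∀ j, ‖(((‖φ‖⁻¹ : ℝ) : 𝕜) • φ) (x j)‖ ^ p = (‖φ‖⁻¹) ^ p * ‖φ (x j)‖ ^ p := by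
    intro j
    rw [smul_apply, norm_smul, RCLike.norm_ofReal,
      abs_of_pos (by positivity), Real.mul_rpow (by positivity) (by positivity)]
  simp_rw [h3] at h2
  rw [tsum_mul_left, Real.inv_rpow hn.le, inv_mul_le_iff₀ (by positivity)] at h2
  rwa [Real.mul_rpow hn.le hw]

lemma WeakBound.smul {p r : ℝ} {x : ℕ → E} (h : WeakBound 𝕜 p r x) (hr : 0 ≤ r) (c : 𝕜) :
    WeakBound 𝕜 p (‖c‖ * r) (fun j => c • x j) := by
  intro φ
  have h3 : ∀ j, ‖φ (c • x j)‖ ^ p = ‖c‖ ^ p * ‖φ (x j)‖ ^ p := by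
    intro j
    rw [map_smul, norm_smul, Real.mul_rpow (by positivity) (by positivity)]
  simp_rw [h3]
  refine ⟨(h φ).1.mul_left _, ?_⟩
  rw [tsum_mul_left, mul_left_comm, Real.mul_rpow (norm_nonneg c) (by positivity)]
  have := (h φ).2
  gcongr

lemma WeakBound.eq_zero {p : ℝ} (hp : 1 ≤ p) {x : ℕ → E} (h : WeakBound 𝕜 p 0 x) (j : ℕ) :
    x j = 0 := by
  have hp0 : p ≠ 0 := by linarith
  refine SeparatingDual.eq_zero_of_forall_dual_eq_zero (R := 𝕜) (V := E) fun φ => ?_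
  have h1 := (h φ).2
  rw [mul_zero, Real.zero_rpow hp0] at h1
  have h2 := ((h φ).1.le_tsum j (fun _ _ => by positivity)).trans h1
  have h3 : ‖φ (x j)‖ ^ p = 0 := le_antisymm h2 (by positivity)
  exact norm_eq_zero.1 ((Real.rpow_eq_zero (norm_nonneg _) hp0).1 h3)

/-- The double sequence `(x n j)` listed as a single sequence via `ℕ ≃ ℕ × ℕ`. -/
def glue (x : ℕ → ℕ → E) : ℕ → E := fun m => x m.unpair.1 m.unpair.2

lemma weaklySummable_glue {p : ℝ} (hp : 1 ≤ p) {x : ℕ → ℕ → E}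
    (h : ∀ n, WeakBound 𝕜 p ((1 / 2) ^ n) (x n)) : WeaklySummable 𝕜 p (glue x) := by
  intro φ
  have hp0 : 0 < p := by linarith
  have key : Summable fun a : ℕ × ℕ => ‖φ (x a.1 a.2)‖ ^ p := by
    rw [summable_prod_of_nonneg (fun _ => by positivity)]
    refine ⟨fun n => (h n φ).1, ?_⟩
    have hgeo : Summable fun n : ℕ => ‖φ‖ ^ p * ((1 / 2 : ℝ) ^ p) ^ n :=
      (summable_geometric_of_lt_one (by positivity)
        (Real.rpow_lt_one (by norm_num) (by norm_num) hp0)).mul_left _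
    refine hgeo.of_nonneg_of_le (fun n => tsum_nonneg fun _ => by positivity) fun n => ?_
    refine (h n φ).2.trans_eq ?_
    rw [Real.mul_rpow (norm_nonneg _) (by positivity), ← Real.rpow_natCast, ← Real.rpow_natCast,
      ← Real.rpow_mul (by norm_num), ← Real.rpow_mul (by norm_num), mul_comm p]
  exact (Nat.pairEquiv.symm.summable_iff (f := fun a : ℕ × ℕ => ‖φ (x a.1 a.2)‖ ^ p)).2 key

end Weak

section Mixed

variable {𝕜 E₁ E₂ E₃ F : Type*} [RCLike 𝕜]
  [NormedAddCommGroup E₁] [NormedSpace 𝕜 E₁] [NormedAddCommGroup E₂] [NormedSpace 𝕜 E₂]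
  [NormedAddCommGroup E₃] [NormedSpace 𝕜 E₃] [NormedAddCommGroup F] [NormedSpace 𝕜 F]

/-- The mixed `ℓ_{q₁}(ℓ_{q₂})` norm of `(T (x j) (y j) (z k))_{j,k}`; meaningful only when the
sums converge. -/
noncomputable def mixedNorm (T : E₁ →L[𝕜] E₂ →L[𝕜] E₃ →L[𝕜] F) (q₁ q₂ : ℝ)
    (x : ℕ → E₁) (y : ℕ → E₂) (z : ℕ → E₃) : ℝ :=
  (∑' j, (∑' k, ‖T (x j) (y j) (z k)‖ ^ q₂) ^ (q₁ / q₂)) ^ (1 / q₁)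

/-- No summability is needed: `tsum_mul_left` also holds for divergent sums. -/
lemma mixedNorm_smul (T : E₁ →L[𝕜] E₂ →L[𝕜] E₃ →L[𝕜] F) {q₁ q₂ : ℝ} (hq₁ : 1 ≤ q₁) (hq₂ : 1 ≤ q₂)
    (a b c : 𝕜) (x : ℕ → E₁) (y : ℕ → E₂) (z : ℕ → E₃) :
    mixedNorm T q₁ q₂ (fun j => a • x j) (fun j => b • y j) (fun j => c • z j) =
      ‖a‖ * ‖b‖ * ‖c‖ * mixedNorm T q₁ q₂ x y z := by
  have h1 : q₁ ≠ 0 := by linarith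
  have h2 : q₂ ≠ 0 := by linarith
  have hd : 0 ≤ ‖a‖ * ‖b‖ * ‖c‖ := by positivity
  have e1 : ∀ j k, ‖T (a • x j) (b • y j) (c • z k)‖ ^ q₂ =
      (‖a‖ * ‖b‖ * ‖c‖) ^ q₂ * ‖T (x j) (y j) (z k)‖ ^ q₂ := by
    intro j k
    rw [← Real.mul_rpow hd (norm_nonneg _)]
    simp only [map_smul, smul_apply, norm_smul]
    congr 1
    ring
  have e2 : ∀ j, (∑' k, ‖T (a • x j) (b • y j) (c • z k)‖ ^ q₂) ^ (q₁ / q₂) =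
      (‖a‖ * ‖b‖ * ‖c‖) ^ q₁ * (∑' k, ‖T (x j) (y j) (z k)‖ ^ q₂) ^ (q₁ / q₂) := by
    intro j
    simp_rw [e1]
    rw [tsum_mul_left, Real.mul_rpow (by positivity) (tsum_nonneg fun _ => by positivity),
      ← Real.rpow_mul hd, mul_div_cancel₀ _ h2]
  unfold mixedNorm
  simp_rw [e2]
  rw [tsum_mul_left, Real.mul_rpow (by positivity) (tsum_nonneg fun _ => by positivity),
    ← Real.rpow_mul hd, mul_one_div_cancel h1, Real.rpow_one]

lemma mixedNorm_eq_zero (T : E₁ →L[𝕜] E₂ →L[𝕜] E₃ →L[𝕜] F) {q₁ q₂ : ℝ} (hq₁ : 1 ≤ q₁)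
    (hq₂ : 1 ≤ q₂) (x : ℕ → E₁) (y : ℕ → E₂) (z : ℕ → E₃)
    (h : ∀ j k, T (x j) (y j) (z k) = 0) : mixedNorm T q₁ q₂ x y z = 0 := by
  have h1 : q₁ ≠ 0 := by linarith
  have h2 : q₂ ≠ 0 := by linarith
  simp [mixedNorm, h, h1, h2, Real.zero_rpow]

/-- Passing to the same subfamily of indices in all three sequences does not increase the
mixed norm. -/
lemma mixedNorm_le_of_injective (T : E₁ →L[𝕜] E₂ →L[𝕜] E₃ →L[𝕜] F) {q₁ q₂ : ℝ}
    (hq₁ : 1 ≤ q₁) (hq₂ : 1 ≤ q₂) {x : ℕ → E₁} {y : ℕ → E₂} {z : ℕ → E₃}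
    (hs : ∀ j, Summable fun k => ‖T (x j) (y j) (z k)‖ ^ q₂)
    (hS : Summable fun j => (∑' k, ‖T (x j) (y j) (z k)‖ ^ q₂) ^ (q₁ / q₂))
    {e : ℕ → ℕ} (he : Function.Injective e) :
    mixedNorm T q₁ q₂ (x ∘ e) (y ∘ e) (z ∘ e) ≤ mixedNorm T q₁ q₂ x y z := by
  have hinner : ∀ j, (∑' k, ‖T (x (e j)) (y (e j)) (z (e k))‖ ^ q₂) ^ (q₁ / q₂) ≤
      (∑' k, ‖T (x (e j)) (y (e j)) (z k)‖ ^ q₂) ^ (q₁ / q₂) := by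
    intro j
    refine Real.rpow_le_rpow (tsum_nonneg fun _ => by positivity) ?_ (by positivity)
    exact tsum_comp_le_tsum_of_inj (hs (e j)) (fun _ => by positivity) he
  have hS' := hS.comp_injective he
  refine Real.rpow_le_rpow (tsum_nonneg fun _ => by positivity) ?_ (by positivity)
  calc ∑' j, (∑' k, ‖T (x (e j)) (y (e j)) (z (e k))‖ ^ q₂) ^ (q₁ / q₂)
      ≤ ∑' j, (∑' k, ‖T (x (e j)) (y (e j)) (z k)‖ ^ q₂) ^ (q₁ / q₂) :=
        (hS'.of_nonneg_of_le (fun _ => by positivity) hinner).tsum_le_tsum hinner hS'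
    _ ≤ _ := tsum_comp_le_tsum_of_inj hS (fun _ => by positivity) he

end Mixed

/-- partially summing trilinear operators (block `{(j₁,j₂,j₃) : j₁ = j₂}`):
if the anisotropic sum `Σ_j (Σ_k ‖T(x_j,y_j,z_k)‖^{q₂})^{q₁/q₂}` is finite for all weakly
summable input sequences, then there is a constant `C ≥ 0` bounding the mixed norm. -/
theorem statement1 {𝕜 E₁ E₂ E₃ F : Type*} [RCLike 𝕜]
    [NormedAddCommGroup E₁] [NormedSpace 𝕜 E₁] [CompleteSpace E₁]
    [NormedAddCommGroup E₂] [NormedSpace 𝕜 E₂] [CompleteSpace E₂]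
    [NormedAddCommGroup E₃] [NormedSpace 𝕜 E₃] [CompleteSpace E₃]
    [NormedAddCommGroup F] [NormedSpace 𝕜 F] [CompleteSpace F]
    (p₁ p₂ p₃ q₁ q₂ : ℝ) (hp₁ : 1 ≤ p₁) (hp₂ : 1 ≤ p₂) (hp₃ : 1 ≤ p₃)
    (hq₁ : 1 ≤ q₁) (hq₂ : 1 ≤ q₂)
    (T : E₁ →L[𝕜] E₂ →L[𝕜] E₃ →L[𝕜] F)
    (hT : ∀ (x : ℕ → E₁) (y : ℕ → E₂) (z : ℕ → E₃),
      WeaklySummable 𝕜 p₁ x → WeaklySummable 𝕜 p₂ y → WeaklySummable 𝕜 p₃ z →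
      (∀ j, Summable fun k => ‖T (x j) (y j) (z k)‖ ^ q₂) ∧
        Summable fun j => (∑' k, ‖T (x j) (y j) (z k)‖ ^ q₂) ^ (q₁ / q₂)) :
    ∃ C : ℝ, 0 ≤ C ∧ ∀ (x : ℕ → E₁) (y : ℕ → E₂) (z : ℕ → E₃),
      WeaklySummable 𝕜 p₁ x → WeaklySummable 𝕜 p₂ y → WeaklySummable 𝕜 p₃ z →
      (∑' j, (∑' k, ‖T (x j) (y j) (z k)‖ ^ q₂) ^ (q₁ / q₂)) ^ (1 / q₁)
        ≤ C * weakNorm 𝕜 p₁ x * weakNorm 𝕜 p₂ y * weakNorm 𝕜 p₃ z := by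
  change ∃ C : ℝ, 0 ≤ C ∧ ∀ (x : ℕ → E₁) (y : ℕ → E₂) (z : ℕ → E₃),
      WeaklySummable 𝕜 p₁ x → WeaklySummable 𝕜 p₂ y → WeaklySummable 𝕜 p₃ z →
      mixedNorm T q₁ q₂ x y z
        ≤ C * weakNorm 𝕜 p₁ x * weakNorm 𝕜 p₂ y * weakNorm 𝕜 p₃ z
  by_contra! hcon
  have hex : ∀ n : ℕ, ∃ (x : ℕ → E₁) (y : ℕ → E₂) (z : ℕ → E₃),
      WeakBound 𝕜 p₁ ((1 / 2) ^ n) x ∧ WeakBound 𝕜 p₂ ((1 / 2) ^ n) y ∧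
      WeakBound 𝕜 p₃ ((1 / 2) ^ n) z ∧ (n : ℝ) < mixedNorm T q₁ q₂ x y z := by
    intro n
    -- The three scalings by `2⁻ⁿ` below cost a factor `8ⁿ`.
    obtain ⟨x, y, z, hx, hy, hz, hlt⟩ := hcon ((2 : ℝ) ^ n * 2 ^ n * 2 ^ n * n) (by positivity)
    have bx := weakBound_weakNorm hp₁ hx
    have b_y := weakBound_weakNorm hp₂ hy
    have bz := weakBound_weakNorm hp₃ hz
    have wx := weakNorm_nonneg (𝕜 := 𝕜) p₁ x
    have wy := weakNorm_nonneg (𝕜 := 𝕜) p₂ y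
    have wz := weakNorm_nonneg (𝕜 := 𝕜) p₃ z
    generalize weakNorm 𝕜 p₁ x = r at *
    generalize weakNorm 𝕜 p₂ y = s at *
    generalize weakNorm 𝕜 p₃ z = t at *
    have hr : 0 < r := by
      refine lt_of_le_of_ne wx fun h => ?_
      subst h
      rw [mixedNorm_eq_zero T hq₁ hq₂ x y z fun j k => by simp [bx.eq_zero hp₁ j]] at hlt
      simp at hlt
    have hs : 0 < s := by
      refine lt_of_le_of_ne wy fun h => ?_
      subst h
      rw [mixedNorm_eq_zero T hq₁ hq₂ x y z fun j k => by simp [b_y.eq_zero hp₂ j]] at hlt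
      simp at hlt
    have ht : 0 < t := by
      refine lt_of_le_of_ne wz fun h => ?_
      subst h
      rw [mixedNorm_eq_zero T hq₁ hq₂ x y z fun j k => by simp [bz.eq_zero hp₃ k]] at hlt
      simp at hlt
    have hnorm : ∀ u : ℝ, 0 < u → ‖(((1 / 2) ^ n / u : ℝ) : 𝕜)‖ = (1 / 2) ^ n / u := by
      intro u hu
      rw [RCLike.norm_ofReal, abs_of_pos (by positivity)]
    have hmul : ∀ u : ℝ, 0 < u → ‖(((1 / 2) ^ n / u : ℝ) : 𝕜)‖ * u = (1 / 2) ^ n := by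
      intro u hu
      rw [hnorm u hu, div_mul_cancel₀ _ hu.ne']
    refine ⟨_, _, _, hmul r hr ▸ bx.smul wx (((1 / 2) ^ n / r : ℝ) : 𝕜),
      hmul s hs ▸ b_y.smul wy (((1 / 2) ^ n / s : ℝ) : 𝕜),
      hmul t ht ▸ bz.smul wz (((1 / 2) ^ n / t : ℝ) : 𝕜), ?_⟩
    rw [mixedNorm_smul T hq₁ hq₂, hnorm r hr, hnorm s hs, hnorm t ht]
    calc (n : ℝ) = (1 / 2) ^ n / r * ((1 / 2) ^ n / s) * ((1 / 2) ^ n / t) *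
          ((2 : ℝ) ^ n * 2 ^ n * 2 ^ n * n * r * s * t) := by
          rw [one_div, inv_pow]
          field_simp
      _ < _ := by gcongr
  choose x y z hx hy hz hlt using hex
  obtain ⟨h1, h2⟩ := hT (glue x) (glue y) (glue z) (weaklySummable_glue hp₁ hx)
    (weaklySummable_glue hp₂ hy) (weaklySummable_glue hp₃ hz)
  obtain ⟨n, hn⟩ := exists_nat_gt (mixedNorm T q₁ q₂ (glue x) (glue y) (glue z))
  have hinj : Function.Injective (Nat.pair n) := fun a b hab => (Nat.pair_eq_pair.1 hab).2
  have hle := mixedNorm_le_of_injective T hq₁ hq₂ h1 h2 hinj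
  -- Along `j ↦ pair n j` the glued sequences are the `n`-th blocks.
  have ex : glue x ∘ Nat.pair n = x n := by ext j; simp [glue]
  have ey : glue y ∘ Nat.pair n = y n := by ext j; simp [glue]
  have ez : glue z ∘ Nat.pair n = z n := by ext j; simp [glue]
  rw [ex, ey, ez] at hle
  exact absurd (hlt n) (not_lt.2 (hle.trans hn.le))
end

section
/- Let 1 ≤ p₁, p₂, q₁, q₂ < ∞ and let B ⊆ ℕ × ℕ be a block. Suppose there exist scalar sequences (λ_j) ∈ ℓ_{p₁} and (μ_k) ∈ ℓ_{p₂} such that Σ_{j=0}^∞ ( Σ_{k ∈ B^j} |λ_j μ_k|^{q₂} )^{q₁/q₂} = ∞. Let E₁, E₂, F be Banach spaces and let T : E₁ × E₂ → F be a continuous bilinear operator such that Σ_{j=0}^∞ ( Σ_{k ∈ B^j} ‖T(x_j, y_k)‖^{q₂} )^{q₁/q₂} < ∞ for every weakly p₁-summable sequence (x_j) in E₁ and every weakly p₂-summable sequence (y_k) in E₂. Then T = 0. -/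
/-- if the 4-tuple `(ℓ_{p₁}, ℓ_{p₂}, ℓ_{q₁}, ℓ_{q₂})` is not `B`-compatible
(witnessed by scalar sequences whose anisotropic block sum diverges), then every continuous
bilinear operator whose anisotropic block sums converge on all weakly summable inputs is
the zero operator. -/
theorem statement8 {𝕜 E₁ E₂ F : Type*} [RCLike 𝕜]
    [NormedAddCommGroup E₁] [NormedSpace 𝕜 E₁] [CompleteSpace E₁]
    [NormedAddCommGroup E₂] [NormedSpace 𝕜 E₂] [CompleteSpace E₂]
    [NormedAddCommGroup F] [NormedSpace 𝕜 F] [CompleteSpace F]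
    (p₁ p₂ q₁ q₂ : ℝ) (hp₁ : 1 ≤ p₁) (hp₂ : 1 ≤ p₂) (hq₁ : 1 ≤ q₁) (hq₂ : 1 ≤ q₂)
    (B : Set (ℕ × ℕ)) (hB : B.Nonempty)
    (lam : ℕ → 𝕜) (mu : ℕ → 𝕜)
    (hlam : Summable fun j => ‖lam j‖ ^ p₁) (hmu : Summable fun k => ‖mu k‖ ^ p₂)
    (hdiv : ¬ ((∀ j, Summable fun k : {k : ℕ // (j, k) ∈ B} => ‖lam j * mu k.1‖ ^ q₂) ∧
      Summable fun j =>
        (∑' k : {k : ℕ // (j, k) ∈ B}, ‖lam j * mu k.1‖ ^ q₂) ^ (q₁ / q₂)))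
    (T : E₁ →L[𝕜] E₂ →L[𝕜] F)
    (hT : ∀ (x : ℕ → E₁) (y : ℕ → E₂),
      WeaklySummable 𝕜 p₁ x → WeaklySummable 𝕜 p₂ y →
      (∀ j, Summable fun k : {k : ℕ // (j, k) ∈ B} => ‖T (x j) (y k.1)‖ ^ q₂) ∧
        Summable fun j =>
          (∑' k : {k : ℕ // (j, k) ∈ B}, ‖T (x j) (y k.1)‖ ^ q₂) ^ (q₁ / q₂)) :
    T = 0 := by
  by_contra hne
  obtain ⟨a, b, hab⟩ : ∃ a b, T a b ≠ 0 := by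
    by_contra! h
    exact hne (by ext a b; simpa using h a b)
  have hc : 0 < ‖T a b‖ ^ q₂ := Real.rpow_pos_of_pos (norm_pos_iff.2 hab) _
  have hd : ((‖T a b‖ ^ q₂) ^ (q₁ / q₂)) ≠ 0 := (Real.rpow_pos_of_pos hc _).ne'
  have key : ∀ j k, ‖T (lam j • a) (mu k • b)‖ ^ q₂ = ‖lam j * mu k‖ ^ q₂ * ‖T a b‖ ^ q₂ := by
    intro j k
    rw [← Real.mul_rpow (norm_nonneg _) (norm_nonneg _), ← norm_smul]
    simp [smul_smul, mul_comm]
  obtain ⟨h1, h2⟩ := hT (fun j => lam j • a) (fun k => mu k • b)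
    (fun φ => by
      simpa [Real.mul_rpow] using hlam.mul_right (‖φ a‖ ^ p₁))
    (fun φ => by
      simpa [Real.mul_rpow] using hmu.mul_right (‖φ b‖ ^ p₂))
  refine hdiv ⟨fun j => ?_, ?_⟩
  · have h := h1 j
    simp only [key] at h
    exact (summable_mul_right_iff hc.ne').1 h
  · simp only [key, tsum_mul_right] at h2
    refine (summable_mul_right_iff hd).1 (h2.congr fun j => ?_)
    exact Real.mul_rpow (tsum_nonneg fun _ => Real.rpow_nonneg (norm_nonneg _) _) hc.le
end

section
/- Let 1 ≤ p₁, p₂, q < ∞ with 1/q ≤ 1/p₁ + 1/p₂, let E₁, E₂, F be Banach spaces and let T : E₁ × E₂ → F be a continuous bilinear operator that is (q; p₁, p₂)-weakly summing, i.e., the sequence ( T(x_j, y_j) )_{j∈ℕ} is weakly q-summable in F for every weakly p₁-summable sequence (x_j) in E₁ and every weakly p₂-summable sequence (y_j) in E₂. Then for all such input sequences, the sequence ( T(x_j, y_j)·e_j )_{j∈ℕ} of elements of ℓ_∞(F) is weakly q-summable in ℓ_∞(F), where T(x_j,y_j)·e_j denotes the element of ℓ_∞(F) with T(x_j,y_j)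 in the j-th coordinate and 0 elsewhere. -/
open scoped ENNReal

theorem WeaklySummable.exists_norm_le {𝕜 F : Type*} [RCLike 𝕜] [NormedAddCommGroup F]
    [NormedSpace 𝕜 F] {q : ℝ} (hq : 1 ≤ q) {z : ℕ → F} (hz : WeaklySummable 𝕜 q z) :
    ∃ C, ∀ j, ‖z j‖ ≤ C := by
  have hpt : ∀ φ : F →L[𝕜] 𝕜, ∃ C, ∀ j,
      ‖NormedSpace.inclusionInDoubleDual 𝕜 F (z j) φ‖ ≤ C := by
    intro φ
    refine ⟨max 1 (∑' j, ‖φ (z j)‖ ^ q), fun j => ?_⟩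
    have h1 : ‖φ (z j)‖ ^ q ≤ ∑' j, ‖φ (z j)‖ ^ q :=
      (hz φ).le_tsum j fun _ _ => by positivity
    rw [NormedSpace.dual_def]
    rcases le_total ‖φ (z j)‖ 1 with h | h
    · exact h.trans (le_max_left _ _)
    · exact ((Real.self_le_rpow_of_one_le h hq).trans h1).trans (le_max_right _ _)
  obtain ⟨C, hC⟩ := banach_steinhaus hpt
  refine ⟨C, fun j => ?_⟩
  rw [← (NormedSpace.inclusionInDoubleDualLi 𝕜 (E := F)).norm_map (z j)]
  exact hC j

/-- A norm bounded sequence `z` in `F` gives a weakly `1`-summable sequence `(z_j e_j)_j`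
in `ℓ_∞(F)`. -/
theorem summable_norm_apply_single {𝕜 F : Type*} [RCLike 𝕜] [NormedAddCommGroup F]
    [NormedSpace 𝕜 F] {C : ℝ} {z : ℕ → F} (hz : ∀ j, ‖z j‖ ≤ C)
    (Φ : lp (fun _ : ℕ => F) ⊤ →L[𝕜] 𝕜) :
    Summable fun j => ‖Φ (lp.single (E := fun _ : ℕ => F) ⊤ j (z j))‖ := by
  have hC : 0 ≤ C := (norm_nonneg _).trans (hz 0)
  have hε : ∀ a : 𝕜, ∃ ε : 𝕜, ‖ε‖ ≤ 1 ∧ ε * a = (‖a‖ : 𝕜) := by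
    intro a
    obtain ⟨ε, h1, h2⟩ := RCLike.exists_norm_mul_eq_self a
    by_cases ha : a = 0
    · exact ⟨0, by simp, by simp [ha]⟩
    · have hε0 : ε ≠ 0 := by rintro rfl; simp at h1
      refine ⟨ε⁻¹, by simp [h1], ?_⟩
      rw [← h2, norm_mul, h1]
      field_simp
      simp
  choose ε hε1 hε2 using hε
  refine summable_of_sum_le (c := ‖Φ‖ * C) (fun _ => norm_nonneg _) fun s => ?_
  set a : ℕ → 𝕜 := fun j => Φ (lp.single (E := fun _ : ℕ => F) ⊤ j (z j)) with ha
  set w : lp (fun _ : ℕ => F) ⊤ :=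
    ∑ j ∈ s, ε (a j) • lp.single (E := fun _ : ℕ => F) ⊤ j (z j) with hw
  have hΦw : Φ w = ((∑ j ∈ s, ‖a j‖ : ℝ) : 𝕜) := by
    simp only [hw, map_sum, map_smul, smul_eq_mul]
    exact Finset.sum_congr rfl fun j _ => hε2 (a j)
  have hwn : ‖w‖ ≤ C := by
    refine lp.norm_le_of_forall_le hC fun i => ?_
    have hi : w i = if i ∈ s then ε (a i) • z i else 0 := by
      rw [hw, lp.coeFn_sum, Finset.sum_apply]
      simp [Pi.single_apply]
    rw [hi]
    split_ifs
    · rw [norm_smul]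
      exact (mul_le_of_le_one_left (norm_nonneg _) (hε1 _)).trans (hz i)
    · simpa using hC
  calc ∑ j ∈ s, ‖a j‖ = ‖Φ w‖ := by
        rw [hΦw, RCLike.norm_ofReal, abs_of_nonneg (Finset.sum_nonneg fun _ _ => norm_nonneg _)]
    _ ≤ ‖Φ‖ * ‖w‖ := Φ.le_opNorm w
    _ ≤ ‖Φ‖ * C := by gcongr

/-- if `T` is `(q;p₁,p₂)`-weakly summing, then for all weakly `p₁`- and
`p₂`-summable inputs the diagonal sequence `(T(x_j,y_j)·e_j)_j` in `ℓ_∞(F)` is weakly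
`q`-summable. -/
theorem statement15 {𝕜 E₁ E₂ F : Type*} [RCLike 𝕜]
    [NormedAddCommGroup E₁] [NormedSpace 𝕜 E₁] [CompleteSpace E₁]
    [NormedAddCommGroup E₂] [NormedSpace 𝕜 E₂] [CompleteSpace E₂]
    [NormedAddCommGroup F] [NormedSpace 𝕜 F] [CompleteSpace F]
    (p₁ p₂ q : ℝ) (hp₁ : 1 ≤ p₁) (hp₂ : 1 ≤ p₂) (hq : 1 ≤ q)
    (hqp : 1 / q ≤ 1 / p₁ + 1 / p₂)
    (T : E₁ →L[𝕜] E₂ →L[𝕜] F)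
    (hT : ∀ (x : ℕ → E₁) (y : ℕ → E₂),
      WeaklySummable 𝕜 p₁ x → WeaklySummable 𝕜 p₂ y →
      WeaklySummable 𝕜 q fun j => T (x j) (y j)) :
    ∀ (x : ℕ → E₁) (y : ℕ → E₂),
      WeaklySummable 𝕜 p₁ x → WeaklySummable 𝕜 p₂ y →
      WeaklySummable 𝕜 q fun j => lp.single (E := fun _ : ℕ => F) ⊤ j (T (x j) (y j)) := by
  intro x y hx hy Φ
  obtain ⟨C, hC⟩ := (hT x y hx hy).exists_norm_le hq
  have hs := summable_norm_apply_single hC Φ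
  refine Summable.of_norm_bounded_eventually_nat hs ?_
  filter_upwards [hs.tendsto_atTop_zero.eventually_le_const one_pos] with j hj
  rw [Real.norm_of_nonneg (by positivity)]
  exact Real.rpow_le_self_of_le_one (norm_nonneg _) hj hq
end
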